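/- arXiv:1908.05198 — 2 statements merged into one kernel-verified Lean document; each statement's English description precedes it below -/
import Mathlib

section
/- For every ε ∈ (0, 1/2] there exists a constant C > 0 (depending only on ε) such that the following holds. Let n, B, B_h ∈ ℕ with B ≥ 2, n ≥ 2B and ε·B ≤ B_h ≤ B/2, and let δ ∈ [0,1]. Let h : {1,...,n} → {1,...,B−B_h} and s : {1,...,n} → {−1,1} be truly random, and let a_1,...,a_n be {0,1}-valued random variables that are mutually independent and independent of (h, s), satisfying Pr[a_j = 1] ≤ δ for every j ∈ {1,...,B_h}. Define f̃_i = 1/i if a_i = 0, and f̃_i = s(i)·Σ_{j=1}^n a_j·1[h(j)=h(i)]·s(j)·(1/j) if a_i = 1. Then (1/H_n)·Σ_{i=1}^n (1/i)·E[|f̃_i − 1/i|] ≤ C·(δ·log B + log(n/B))·(1 + δ·log B)/(B·log n), where H_n = Σ_{i=1}^n 1/i. -/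
/-- Expectation of a real-valued random variable on a finite probability space
with the uniform distribution. -/
noncomputable def expUnif {Ω : Type*} [Fintype Ω] (X : Ω → ℝ) : ℝ :=
  (∑ ω : Ω, X ω) / (Fintype.card Ω : ℝ)

/-- The sign `±1` encoded by a boolean. -/
def sgn (b : Bool) : ℝ := if b then 1 else -1

/-- Zipfian frequency of the item indexed by `i : Fin n` (representing item `i+1`):
`f_{i+1} = 1/(i+1)`. -/
noncomputable def zipf {n : ℕ} (i : Fin n) : ℝ := ((i : ℝ) + 1)⁻¹

/-- Expectation over mutually independent classification bits `a : Fin n → Bool`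
(with `Pr[a_j = 1] = p j`) together with an independent uniformly random pair
`(h, s)` of hash/sign functions. -/
noncomputable def noisyExp {n m : ℕ} (p : Fin n → ℝ)
    (X : (Fin n → Bool) → (Fin n → Fin m) → (Fin n → Bool) → ℝ) : ℝ :=
  ∑ a : Fin n → Bool,
    (∏ j : Fin n, if a j then p j else 1 - p j) *
      expUnif (fun ω : (Fin n → Fin m) × (Fin n → Bool) => X a ω.1 ω.2)

/-!
The estimate of a hashed item is off by the signed frequencies of the other hashed items in its
bucket. Items from the true heavy set enter through the triangle inequality: such an item is hashed
with probability at most `δ` and lands in the bucket with probability `1 / m`. For the remaining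
items the random signs cancel all cross terms of the second moment, which is therefore at most
`(∑ f_j ^ 2) / m = O(1 / B ^ 2)`, so by Jensen they add `O(1 / B)`. As an item is only misestimated
when it is hashed, and independently of the other bits, the weighted error is at most the product
of the expected hashed mass `∑ p_i f_i = O(δ log B + log (n / B))` and the noise per bucket
`O((1 + δ log B) / B)`.
-/

open Finset
open scoped BigOperators

section ProductMeasure

variable {ι : Type*} [Fintype ι] [DecidableEq ι]

lemma sum_prod_mul_prod_eq_prod_sum {κ : ι → Type*} [∀ k, Fintype (κ k)] {R : Type*}
    [CommSemiring R] {w : ∀ k, κ k → R} (hw : ∀ k, ∑ y, w k y = 1) (u : ∀ k, κ k → R)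
    (t : Finset ι) :
    ∑ x : ∀ k, κ k, (∏ k, w k (x k)) * ∏ k ∈ t, u k (x k) = ∏ k ∈ t, ∑ y, w k y * u k y := by
  calc ∑ x : ∀ k, κ k, (∏ k, w k (x k)) * ∏ k ∈ t, u k (x k)
      = ∑ x : ∀ k, κ k, ∏ k, w k (x k) * if k ∈ t then u k (x k) else 1 := by
        simp only [prod_mul_distrib, prod_ite_mem, univ_inter]
    _ = ∏ k, ∑ y, w k y * if k ∈ t then u k y else 1 := by
        rw [prod_univ_sum, Fintype.piFinset_univ]
    _ = ∏ k, if k ∈ t then ∑ y, w k y * u k y else 1 :=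
        prod_congr rfl fun k _ ↦ by split_ifs <;> simp [hw]
    _ = ∏ k ∈ t, ∑ y, w k y * u k y := by rw [prod_ite_mem, univ_inter]

variable {K : Type*} [Field K] [CharZero K]

lemma expect_prod_apply {κ : ι → Type*} [∀ k, Fintype (κ k)] [∀ k, Nonempty (κ k)]
    (u : ∀ k, κ k → K) (t : Finset ι) :
    𝔼 x : ∀ k, κ k, ∏ k ∈ t, u k (x k) = ∏ k ∈ t, 𝔼 y, u k y := by
  have h := sum_prod_mul_prod_eq_prod_sum (w := fun k (_ : κ k) ↦ (Fintype.card (κ k) : K)⁻¹)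
    (by simp) u t
  simpa [Fintype.expect_eq_sum_div_card, div_eq_inv_mul, mul_sum] using h

lemma expect_eq_apply {κ : Type*} [Fintype κ] [Nonempty κ] [DecidableEq κ] {i j : ι} (hij : i ≠ j) :
    𝔼 x : ι → κ, (if x i = x j then 1 else 0 : K) = (Fintype.card κ : K)⁻¹ := by
  calc 𝔼 x : ι → κ, (if x i = x j then 1 else 0 : K)
      = 𝔼 x : ι → κ, ∑ v, ∏ k ∈ {i, j}, if x k = v then 1 else 0 := by
        simp [prod_pair hij, eq_comm]
    _ = ∑ v : κ, ∏ k ∈ {i, j}, 𝔼 y, (if y = v then 1 else 0) := by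
        rw [expect_sum_comm]
        exact sum_congr rfl fun v _ ↦ expect_prod_apply (fun _ y ↦ if y = v then 1 else 0) _
    _ = (Fintype.card κ : K)⁻¹ := by
        simp [prod_pair hij]

end ProductMeasure

section UniformExpectation

lemma expUnif_eq_expect {Ω : Type*} [Fintype Ω] (X : Ω → ℝ) : expUnif X = 𝔼 ω, X ω :=
  (Fintype.expect_eq_sum_div_card X).symm

lemma expect_abs_le_sqrt_expect_sq {Ω : Type*} [Fintype Ω] [Nonempty Ω] (X : Ω → ℝ) :
    𝔼 ω, |X ω| ≤ √(𝔼 ω, X ω ^ 2) := by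
  refine Real.le_sqrt_of_sq_le ?_
  simpa using expect_mul_sq_le_sq_mul_sq univ (fun ω ↦ |X ω|) 1

lemma expect_fst {α β M : Type*} [Fintype α] [Fintype β] [Nonempty β] [AddCommMonoid M]
    [Module ℚ≥0 M] (X : α → M) :
    𝔼 ω : α × β, X ω.1 = 𝔼 x, X x := by
  simp [← univ_product_univ, expect_product]

end UniformExpectation

section RademacherSigns

@[simp]
lemma sgn_mul_self (b : Bool) : sgn b * sgn b = 1 := by cases b <;> simp [sgn]

@[simp]
lemma abs_sgn (b : Bool) : |sgn b| = 1 := by cases b <;> simp [sgn]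

lemma expect_sgn : 𝔼 b, sgn b = 0 := by rw [Fintype.expect_eq_sum_div_card]; simp [sgn]

variable {ι : Type*} [Fintype ι] [DecidableEq ι]

lemma expect_sgn_mul_sgn (j k : ι) :
    𝔼 s : ι → Bool, sgn (s j) * sgn (s k) = if j = k then 1 else 0 := by
  split_ifs with hjk
  · simp [hjk]
  · have h := expect_prod_apply (fun _ : ι ↦ sgn) {j, k}
    simpa only [prod_pair hjk, expect_sgn, mul_zero] using h

lemma expect_sum_sgn_mul_sq (c : ι → ℝ) (t : Finset ι) :
    𝔼 s : ι → Bool, (∑ j ∈ t, sgn (s j) * c j) ^ 2 = ∑ j ∈ t, c j ^ 2 := by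
  calc 𝔼 s : ι → Bool, (∑ j ∈ t, sgn (s j) * c j) ^ 2
      = 𝔼 s : ι → Bool, ∑ j ∈ t, ∑ k ∈ t, c j * c k * (sgn (s j) * sgn (s k)) := by
        simp only [sq, sum_mul_sum, mul_mul_mul_comm, mul_comm]
    _ = ∑ j ∈ t, ∑ k ∈ t, c j * c k * if j = k then 1 else 0 := by
        simp only [expect_sum_comm, ← mul_expect, expect_sgn_mul_sgn]
    _ = ∑ j ∈ t, c j ^ 2 := by simp +contextual [sq]

end RademacherSigns

section Bernoulli

variable {ι : Type*} [Fintype ι]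

/-- The probability of the outcome `a` of independent bits with `Pr[a j = 1] = p j`. -/
noncomputable def bernoulliWeight (p : ι → ℝ) (a : ι → Bool) : ℝ :=
  ∏ j, if a j then p j else 1 - p j

lemma bernoulliWeight_nonneg {p : ι → ℝ} (hp₀ : ∀ j, 0 ≤ p j) (hp₁ : ∀ j, p j ≤ 1)
    (a : ι → Bool) : 0 ≤ bernoulliWeight p a :=
  prod_nonneg fun j _ ↦ by split_ifs <;> simp [hp₀, hp₁]

lemma sum_bernoulliWeight_mul_ite_forall [DecidableEq ι] (p : ι → ℝ) (t : Finset ι) :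
    ∑ a, bernoulliWeight p a * (if ∀ j ∈ t, a j = true then 1 else 0) = ∏ j ∈ t, p j := by
  have h := sum_prod_mul_prod_eq_prod_sum (w := fun j (b : Bool) ↦ if b then p j else 1 - p j)
    (by simp) (fun _ b ↦ if b then 1 else 0) t
  simpa [bernoulliWeight, prod_boole] using h

lemma sum_bernoulliWeight_mul_ite_sum [DecidableEq ι] (p c : ι → ℝ) (K : ℝ) {i : ι}
    {t : Finset ι} (hi : i ∉ t) :
    ∑ a, bernoulliWeight p a * (if a i then ∑ j ∈ t, (if a j then c j else 0) + K else 0)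
      = p i * (∑ j ∈ t, p j * c j + K) := by
  have hsingle : ∑ a, bernoulliWeight p a * (if a i then 1 else 0) = p i := by
    simpa using sum_bernoulliWeight_mul_ite_forall p {i}
  have hpair {j : ι} (hj : j ∈ t) :
      ∑ a, bernoulliWeight p a * (if a i = true ∧ a j = true then 1 else 0) = p i * p j := by
    simpa [prod_pair (ne_of_mem_of_not_mem hj hi).symm]
      using sum_bernoulliWeight_mul_ite_forall p {i, j}
  calc ∑ a, bernoulliWeight p a * (if a i then ∑ j ∈ t, (if a j then c j else 0) + K else 0)
      = ∑ a, (∑ j ∈ t, c j * (bernoulliWeight p a * if a i = true ∧ a j = true then 1 else 0)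
          + K * (bernoulliWeight p a * if a i then 1 else 0)) := by
        refine sum_congr rfl fun a _ ↦ ?_
        by_cases hai : a i = true <;> simp [hai, mul_add, mul_sum, mul_comm]
    _ = ∑ j ∈ t, c j * (p i * p j) + K * p i := by
        rw [sum_add_distrib, sum_comm, ← mul_sum, hsingle]
        congr 1
        exact sum_congr rfl fun j hj ↦ by rw [← mul_sum, hpair hj]
    _ = p i * (∑ j ∈ t, p j * c j + K) := by
        rw [mul_add, mul_sum, mul_comm K]
        congr 1
        exact sum_congr rfl fun j _ ↦ by ring

end Bernoulli

section Estimator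

variable {ι κ : Type*}

/-- The frequency that item `j` adds, up to its sign, to the counter from which `f i` is estimated:
`f j` if `j` is sent to the sketch and shares the bucket of `i`, and `0` otherwise. -/
def collidingFreq [DecidableEq κ] (f : ι → ℝ) (a : ι → Bool) (h : ι → κ) (i j : ι) : ℝ :=
  if a j = true ∧ h j = h i then f j else 0

/-- The estimate of `f i` by a one-row Count-Sketch in which only the items `j` with `a j = true`
are hashed, the others being counted exactly. -/
def countSketchEstimate [Fintype ι] [DecidableEq κ] (f : ι → ℝ) (a : ι → Bool) (h : ι → κ)
    (s : ι → Bool) (i : ι) : ℝ :=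
  if a i then sgn (s i) * ∑ j, if a j = true ∧ h j = h i then sgn (s j) * f j else 0 else f i

section Pointwise

variable [DecidableEq κ] (f : ι → ℝ) (a : ι → Bool) (h : ι → κ)

lemma collidingFreq_eq_mul (i j : ι) :
    collidingFreq f a h i j = (if a j then f j else 0) * if h j = h i then 1 else 0 := by
  simp only [collidingFreq, ite_and, mul_ite, mul_one, mul_zero]
  split_ifs <;> rfl

lemma abs_collidingFreq (i j : ι) :
    |collidingFreq f a h i j| = collidingFreq (|f ·|) a h i j := by
  simp only [collidingFreq, apply_ite abs, abs_zero]

lemma collidingFreq_sq (i j : ι) :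
    collidingFreq f a h i j ^ 2 = collidingFreq (f · ^ 2) a h i j := by
  simp [collidingFreq]

variable [Fintype ι] [DecidableEq ι] {f a h}

lemma countSketchEstimate_sub_self {i : ι} (hai : a i = true) (s : ι → Bool) :
    countSketchEstimate f a h s i - f i
      = sgn (s i) * ∑ j ∈ univ.erase i, sgn (s j) * collidingFreq f a h i j := by
  have hself : collidingFreq f a h i i = f i := by simp [collidingFreq, hai]
  have hest : countSketchEstimate f a h s i
      = sgn (s i) * ∑ j, sgn (s j) * collidingFreq f a h i j := by
    simp [countSketchEstimate, collidingFreq, hai]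
  rw [hest, ← add_sum_erase univ _ (mem_univ i), hself]
  linear_combination f i * sgn_mul_self (s i)

lemma abs_countSketchEstimate_sub_self_le {i : ι} (hai : a i = true) (s : ι → Bool)
    (t : Finset ι) :
    |countSketchEstimate f a h s i - f i|
      ≤ ∑ j ∈ t.erase i, collidingFreq (|f ·|) a h i j
        + |∑ j ∈ tᶜ.erase i, sgn (s j) * collidingFreq f a h i j| := by
  set c : ι → ℝ := fun j ↦ sgn (s j) * collidingFreq f a h i j
  have hsplit : ∑ j ∈ univ.erase i, c j = ∑ j ∈ t.erase i, c j + ∑ j ∈ tᶜ.erase i, c j := by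
    simp only [← sdiff_singleton_eq_erase, ← filter_notMem_eq_sdiff, sum_filter, sum_add_sum_compl]
  calc |countSketchEstimate f a h s i - f i|
      = |∑ j ∈ t.erase i, c j + ∑ j ∈ tᶜ.erase i, c j| := by
        rw [countSketchEstimate_sub_self hai, abs_mul, abs_sgn, one_mul, hsplit]
    _ ≤ ∑ j ∈ t.erase i, |c j| + |∑ j ∈ tᶜ.erase i, c j| :=
        (abs_add_le _ _).trans (add_le_add_left (abs_sum_le_sum_abs _ _) _)
    _ = _ := by simp only [c, abs_mul, abs_sgn, one_mul, abs_collidingFreq]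

end Pointwise

variable [Fintype ι] [DecidableEq ι] [Fintype κ] [DecidableEq κ] [Nonempty κ]

lemma expect_collidingFreq (f : ι → ℝ) (a : ι → Bool) {i j : ι} (hji : j ≠ i) :
    𝔼 h : ι → κ, collidingFreq f a h i j = if a j then f j / Fintype.card κ else 0 := by
  simp only [collidingFreq_eq_mul, ← mul_expect, expect_eq_apply hji]
  rw [ite_mul, zero_mul, div_eq_mul_inv]

lemma expect_sum_collidingFreq (f : ι → ℝ) (a : ι → Bool) (i : ι) (t : Finset ι) :
    𝔼 h : ι → κ, ∑ j ∈ t.erase i, collidingFreq f a h i j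
      = ∑ j ∈ t.erase i, if a j then f j / Fintype.card κ else 0 := by
  rw [expect_sum_comm]
  exact sum_congr rfl fun j hj ↦ expect_collidingFreq f a (ne_of_mem_erase hj)

lemma expect_sum_sgn_mul_collidingFreq_sq (f : ι → ℝ) (a : ι → Bool) (i : ι) (t : Finset ι) :
    𝔼 ω : (ι → κ) × (ι → Bool), (∑ j ∈ t.erase i, sgn (ω.2 j) * collidingFreq f a ω.1 i j) ^ 2
      = ∑ j ∈ t.erase i, if a j then f j ^ 2 / Fintype.card κ else 0 := by
  rw [← univ_product_univ, expect_product]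
  simp only [expect_sum_sgn_mul_sq, collidingFreq_sq, expect_sum_collidingFreq]

lemma expect_abs_sum_sgn_mul_collidingFreq_le (f : ι → ℝ) (a : ι → Bool) (i : ι)
    (t : Finset ι) :
    𝔼 ω : (ι → κ) × (ι → Bool), |∑ j ∈ t.erase i, sgn (ω.2 j) * collidingFreq f a ω.1 i j|
      ≤ √((∑ j ∈ t, f j ^ 2) / Fintype.card κ) := by
  refine (expect_abs_le_sqrt_expect_sq _).trans (Real.sqrt_le_sqrt ?_)
  rw [expect_sum_sgn_mul_collidingFreq_sq, sum_div]
  have hnonneg (j : ι) : 0 ≤ f j ^ 2 / Fintype.card κ := by positivity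
  calc ∑ j ∈ t.erase i, (if a j then f j ^ 2 / Fintype.card κ else 0)
      ≤ ∑ j ∈ t.erase i, f j ^ 2 / Fintype.card κ :=
        sum_le_sum fun j _ ↦ by split_ifs <;> simp [hnonneg]
    _ ≤ ∑ j ∈ t, f j ^ 2 / Fintype.card κ :=
        sum_le_sum_of_subset_of_nonneg (erase_subset _ _) fun j _ _ ↦ hnonneg j

lemma expect_abs_countSketchEstimate_sub_self_le (f : ι → ℝ) {a : ι → Bool} {i : ι}
    (hai : a i = true) (t : Finset ι) :
    𝔼 ω : (ι → κ) × (ι → Bool), |countSketchEstimate f a ω.1 ω.2 i - f i|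
      ≤ ∑ j ∈ t.erase i, (if a j then |f j| / Fintype.card κ else 0)
        + √((∑ j ∈ tᶜ, f j ^ 2) / Fintype.card κ) := by
  calc 𝔼 ω : (ι → κ) × (ι → Bool), |countSketchEstimate f a ω.1 ω.2 i - f i|
      ≤ 𝔼 ω : (ι → κ) × (ι → Bool), (∑ j ∈ t.erase i, collidingFreq (|f ·|) a ω.1 i j
          + |∑ j ∈ tᶜ.erase i, sgn (ω.2 j) * collidingFreq f a ω.1 i j|) :=
        expect_le_expect fun ω _ ↦ abs_countSketchEstimate_sub_self_le hai ω.2 t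
    _ ≤ _ := by
        rw [expect_add_distrib,
          expect_fst (fun h : ι → κ ↦ ∑ j ∈ t.erase i, collidingFreq (|f ·|) a h i j),
          expect_sum_collidingFreq]
        gcongr
        exact expect_abs_sum_sgn_mul_collidingFreq_le f a i tᶜ

end Estimator

section NoisyOracle

/-- Bound on the expected collision noise in the bucket of a hashed item when there are `m` buckets.
The items in `t` enter through the triangle inequality, weighted by their probabilities `p j` of
being hashed, and the items outside `t` through their second moment. -/
noncomputable def collisionNoiseBound {ι : Type*} [Fintype ι] [DecidableEq ι] (f p : ι → ℝ)
    (t : Finset ι) (m : ℕ) : ℝ :=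
  (∑ j ∈ t, p j * |f j|) / m + √((∑ j ∈ tᶜ, f j ^ 2) / m)

variable {n m : ℕ} {p : Fin n → ℝ}

lemma noisyExp_eq_sum_bernoulliWeight
    (X : (Fin n → Bool) → (Fin n → Fin m) → (Fin n → Bool) → ℝ) :
    noisyExp p X = ∑ a, bernoulliWeight p a *
      𝔼 ω : (Fin n → Fin m) × (Fin n → Bool), X a ω.1 ω.2 := by
  simp only [noisyExp, bernoulliWeight, expUnif_eq_expect]

variable [NeZero m]

lemma noisyExp_abs_countSketchEstimate_sub_self_le (f : Fin n → ℝ) (hp₀ : ∀ j, 0 ≤ p j)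
    (hp₁ : ∀ j, p j ≤ 1) (i : Fin n) (t : Finset (Fin n)) :
    noisyExp (m := m) p (fun a h s ↦ |countSketchEstimate f a h s i - f i|)
      ≤ p i * collisionNoiseBound f p t m := by
  set light : ℝ := √((∑ j ∈ tᶜ, f j ^ 2) / m)
  have hbits (a : Fin n → Bool) :
      𝔼 ω : (Fin n → Fin m) × (Fin n → Bool), |countSketchEstimate f a ω.1 ω.2 i - f i|
        ≤ if a i then ∑ j ∈ t.erase i, (if a j then |f j| / m else 0) + light else 0 := by
    split_ifs with hai
    · simpa only [Fintype.card_fin] using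
        expect_abs_countSketchEstimate_sub_self_le (κ := Fin m) f hai t
    · simp [countSketchEstimate, hai]
  calc noisyExp (m := m) p (fun a h s ↦ |countSketchEstimate f a h s i - f i|)
      ≤ ∑ a, bernoulliWeight p a *
          if a i then ∑ j ∈ t.erase i, (if a j then |f j| / m else 0) + light else 0 := by
        rw [noisyExp_eq_sum_bernoulliWeight]
        exact sum_le_sum fun a _ ↦
          mul_le_mul_of_nonneg_left (hbits a) (bernoulliWeight_nonneg hp₀ hp₁ a)
    _ = p i * ((∑ j ∈ t.erase i, p j * |f j|) / m + light) := by
        simp only [sum_bernoulliWeight_mul_ite_sum p _ _ (notMem_erase i t), sum_div, mul_div_assoc]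
    _ ≤ p i * collisionNoiseBound f p t m := by
        unfold collisionNoiseBound
        gcongr
        · exact hp₀ i
        · exact fun j _ _ ↦ mul_nonneg (hp₀ j) (abs_nonneg _)
        · exact erase_subset _ _

lemma sum_mul_noisyExp_abs_countSketchEstimate_sub_self_le {q : Fin n → ℝ} (hq : ∀ i, 0 ≤ q i)
    (f : Fin n → ℝ) (hp₀ : ∀ j, 0 ≤ p j) (hp₁ : ∀ j, p j ≤ 1) (t : Finset (Fin n)) :
    ∑ i, q i * noisyExp (m := m) p (fun a h s ↦ |countSketchEstimate f a h s i - f i|)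
      ≤ (∑ i, p i * q i) * collisionNoiseBound f p t m := by
  rw [sum_mul]
  refine sum_le_sum fun i _ ↦ ?_
  rw [mul_comm (p i), mul_assoc]
  gcongr
  · exact hq i
  · exact noisyExp_abs_countSketchEstimate_sub_self_le f hp₀ hp₁ i t

end NoisyOracle

section Zipf

/-- The set of the `k` most frequent items, which have the indices `0, …, k - 1`. -/
def heavyItems (n k : ℕ) : Finset (Fin n) := {j | (j : ℕ) < k}

variable {n k : ℕ}

lemma mem_heavyItems {j : Fin n} : j ∈ heavyItems n k ↔ (j : ℕ) < k := by simp [heavyItems]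

lemma zipf_pos (i : Fin n) : 0 < zipf i := by unfold zipf; positivity

lemma sum_zipf_eq_harmonic : ∑ i : Fin n, zipf i = harmonic n := by
  simp [zipf, harmonic, Fin.sum_univ_eq_sum_range (fun j ↦ ((j : ℝ) + 1)⁻¹)]

lemma log_le_sum_zipf (hn : n ≠ 0) : Real.log n ≤ ∑ i : Fin n, zipf i := by
  rw [sum_zipf_eq_harmonic]
  refine (Real.log_le_log (by positivity) ?_).trans (log_add_one_le_harmonic n)
  exact_mod_cast n.le_succ

lemma sum_heavyItems {M : Type*} [AddCommMonoid M] (g : ℕ → M) (hk : k ≤ n) :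
    ∑ j ∈ heavyItems n k, g j = ∑ j ∈ range k, g j := by
  rw [heavyItems, sum_filter, Fin.sum_univ_eq_sum_range (fun j ↦ if j < k then g j else 0),
    ← sum_filter]
  congr 1
  grind

lemma sum_compl_heavyItems {M : Type*} [AddCommMonoid M] (g : ℕ → M) :
    ∑ j ∈ (heavyItems n k)ᶜ, g j = ∑ j ∈ Ico k n, g j := by
  rw [heavyItems, compl_filter, sum_filter,
    Fin.sum_univ_eq_sum_range (fun j ↦ if ¬ j < k then g j else 0), ← sum_filter]
  congr 1
  grind

lemma sum_heavyItems_zipf_eq_harmonic (hk : k ≤ n) :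
    ∑ j ∈ heavyItems n k, zipf j = harmonic k := by
  simp [zipf, harmonic, sum_heavyItems (fun j ↦ ((j : ℝ) + 1)⁻¹) hk]

lemma sum_compl_heavyItems_zipf_sq_le (hk₀ : k ≠ 0) (hk : k ≤ n) :
    ∑ j ∈ (heavyItems n k)ᶜ, zipf j ^ 2 ≤ (k : ℝ)⁻¹ := by
  calc ∑ j ∈ (heavyItems n k)ᶜ, zipf j ^ 2
      = ∑ j ∈ Ioc k n, ((j : ℝ) ^ 2)⁻¹ := by
        rw [← Ico_add_one_add_one_eq_Ioc, ← sum_Ico_add',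
          ← sum_compl_heavyItems (fun j ↦ (((j + 1 : ℕ) : ℝ) ^ 2)⁻¹)]
        simp [zipf]
    _ ≤ (k : ℝ)⁻¹ - (n : ℝ)⁻¹ := sum_Ioc_inv_sq_le_sub hk₀ hk
    _ ≤ (k : ℝ)⁻¹ := sub_le_self _ (by positivity)

lemma sum_compl_heavyItems_zipf_le (hk₀ : k ≠ 0) (hk : k ≤ n) :
    ∑ j ∈ (heavyItems n k)ᶜ, zipf j ≤ 1 + Real.log (n / k) := by
  have hsplit := sum_add_sum_compl (heavyItems n k) zipf
  have hlog : Real.log k ≤ harmonic k := by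
    simpa [sum_zipf_eq_harmonic] using log_le_sum_zipf hk₀
  rw [sum_zipf_eq_harmonic, sum_heavyItems_zipf_eq_harmonic hk] at hsplit
  rw [Real.log_div (by norm_cast; omega) (by norm_cast)]
  linarith [harmonic_le_one_add_log n]

end Zipf

section Asymptotics

variable {n B k : ℕ} {ε δ : ℝ} {p : Fin n → ℝ}

lemma sum_heavyItems_mul_zipf_le (hk : k ≤ n) (hδ₀ : 0 ≤ δ)
    (hpδ : ∀ j ∈ heavyItems n k, p j ≤ δ) :
    ∑ j ∈ heavyItems n k, p j * zipf j ≤ δ * (1 + Real.log k) := by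
  calc ∑ j ∈ heavyItems n k, p j * zipf j
      ≤ ∑ j ∈ heavyItems n k, δ * zipf j :=
        sum_le_sum fun j hj ↦ mul_le_mul_of_nonneg_right (hpδ j hj) (zipf_pos j).le
    _ = δ * harmonic k := by rw [← mul_sum, sum_heavyItems_zipf_eq_harmonic hk]
    _ ≤ δ * (1 + Real.log k) := by gcongr; exact harmonic_le_one_add_log k

lemma sum_mul_zipf_le (hk₀ : k ≠ 0) (hk : k ≤ n) (hδ₀ : 0 ≤ δ) (hp₁ : ∀ j, p j ≤ 1)
    (hpδ : ∀ j ∈ heavyItems n k, p j ≤ δ) :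
    ∑ j, p j * zipf j ≤ δ * (1 + Real.log k) + (1 + Real.log (n / k)) := by
  rw [← sum_add_sum_compl (heavyItems n k)]
  gcongr
  · exact sum_heavyItems_mul_zipf_le hk hδ₀ hpδ
  · refine (sum_le_sum fun j _ ↦ ?_).trans (sum_compl_heavyItems_zipf_le hk₀ hk)
    exact mul_le_of_le_one_left (zipf_pos j).le (hp₁ j)

lemma sum_mul_zipf_le_mul_log (hε : 0 < ε) (hB : B ≠ 0) (hBn : 2 * B ≤ n) (hεB : ε * B ≤ k)
    (hkB : k ≤ B) (hδ₀ : 0 ≤ δ) (hδ₁ : δ ≤ 1) (hp₁ : ∀ j, p j ≤ 1)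
    (hpδ : ∀ j ∈ heavyItems n k, p j ≤ δ) :
    ∑ j, p j * zipf j ≤ (5 + 2 / ε) * (δ * Real.log B + Real.log (n / B)) := by
  have hB₀ : (0 : ℝ) < B := by positivity
  have hk₀ : (0 : ℝ) < k := lt_of_lt_of_le (by positivity) hεB
  have hn₀ : (0 : ℝ) < n := by norm_cast; omega
  have hlogB : 0 ≤ Real.log B := Real.log_natCast_nonneg B
  have hlogk : Real.log k ≤ Real.log B := Real.log_le_log hk₀ (by exact_mod_cast hkB)
  have hlogn : 1 / 2 ≤ Real.log (n / B) := by
    have htwo : (2 : ℝ) ≤ n / B := by rw [le_div_iff₀ hB₀]; exact_mod_cast hBn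
    linarith [Real.log_two_gt_d9, Real.log_le_log two_pos htwo]
  have hratio : Real.log (n / k) ≤ Real.log (n / B) + 1 / ε := by
    have hBk : (B / k : ℝ) ≤ 1 / ε := by rw [div_le_div_iff₀ hk₀ hε]; linarith
    have hfactor : (n / k : ℝ) = n / B * (B / k) := by field_simp
    rw [hfactor, Real.log_mul (by positivity) (by positivity)]
    gcongr
    exact (Real.log_le_self (by positivity)).trans hBk
  calc ∑ j, p j * zipf j
      ≤ δ * (1 + Real.log k) + (1 + Real.log (n / k)) :=
        sum_mul_zipf_le (Nat.cast_pos.1 hk₀).ne' (by omega) hδ₀ hp₁ hpδ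
    _ ≤ δ * Real.log B + Real.log (n / B) + (2 + 1 / ε) := by
        linarith [mul_le_mul_of_nonneg_left hlogk hδ₀]
    _ ≤ δ * Real.log B + Real.log (n / B)
          + (2 + 1 / ε) * (2 * (δ * Real.log B + Real.log (n / B))) := by
        gcongr
        refine le_mul_of_one_le_right (by positivity) ?_
        linarith [mul_nonneg hδ₀ hlogB]
    _ = (5 + 2 / ε) * (δ * Real.log B + Real.log (n / B)) := by ring

lemma collisionNoiseBound_zipf_le {m : ℕ} (hε : 0 < ε) (hB : B ≠ 0) (hkn : k ≤ n) (hεB : ε * B ≤ k)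
    (hkB : k ≤ B) (hmB : B ≤ 2 * m) (hδ₀ : 0 ≤ δ) (hδ₁ : δ ≤ 1)
    (hpδ : ∀ j ∈ heavyItems n k, p j ≤ δ) :
    collisionNoiseBound zipf p (heavyItems n k) m
      ≤ (2 + √(2 / ε)) * (1 + δ * Real.log B) / B := by
  have hB₀ : (0 : ℝ) < B := by positivity
  have hk₀ : (0 : ℝ) < k := lt_of_lt_of_le (by positivity) hεB
  have hm : (B / 2 : ℝ) ≤ m := by
    have : (B : ℝ) ≤ 2 * m := by exact_mod_cast hmB
    linarith
  have hδlog : 0 ≤ δ * Real.log B := mul_nonneg hδ₀ (Real.log_natCast_nonneg B)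
  have hheavy : (∑ j ∈ heavyItems n k, p j * zipf j) / m ≤ 2 * (1 + δ * Real.log B) / B := by
    have hlogk : Real.log k ≤ Real.log B := Real.log_le_log hk₀ (by exact_mod_cast hkB)
    calc (∑ j ∈ heavyItems n k, p j * zipf j) / m
        ≤ (1 + δ * Real.log B) / (B / 2) := by
          gcongr
          linarith [sum_heavyItems_mul_zipf_le hkn hδ₀ hpδ, mul_le_mul_of_nonneg_left hlogk hδ₀]
      _ = 2 * (1 + δ * Real.log B) / B := by ring
  have hlight : √((∑ j ∈ (heavyItems n k)ᶜ, zipf j ^ 2) / m) ≤ √(2 / ε) / B := by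
    have hsqrt : √(2 / ε) / B = √(2 / ε / B ^ 2) := by
      rw [Real.sqrt_div' _ (sq_nonneg _), Real.sqrt_sq hB₀.le]
    rw [hsqrt]
    apply Real.sqrt_le_sqrt
    calc (∑ j ∈ (heavyItems n k)ᶜ, zipf j ^ 2) / m
        ≤ (k : ℝ)⁻¹ / m := by
          gcongr
          exact sum_compl_heavyItems_zipf_sq_le (Nat.cast_pos.1 hk₀).ne' hkn
      _ ≤ (ε * B)⁻¹ / (B / 2) := by gcongr
      _ = 2 / ε / B ^ 2 := by field_simp
  calc collisionNoiseBound zipf p (heavyItems n k) m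
      ≤ 2 * (1 + δ * Real.log B) / B + √(2 / ε) / B := by
        simp only [collisionNoiseBound, abs_of_pos (zipf_pos _)]
        exact add_le_add hheavy hlight
    _ ≤ 2 * (1 + δ * Real.log B) / B + √(2 / ε) * (1 + δ * Real.log B) / B := by
        gcongr
        exact le_mul_of_one_le_right (by positivity) (by linarith)
    _ = (2 + √(2 / ε)) * (1 + δ * Real.log B) / B := by ring

end Asymptotics

/-- learned Count-Sketch with one row, using a noisy heavy hitter
oracle that misclassifies each of the `Bh` heavy items with probability at most `δ`,
incurs expected (query-weighted) error
`O((δ·log B + log(n/B))·(1 + δ·log B)/(B·log n))`. -/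
theorem learned_countSketch_noisy_oracle :
    ∀ ε : ℝ, 0 < ε → ε ≤ 1 / 2 →
      ∃ C : ℝ, 0 < C ∧
        ∀ n B Bh : ℕ, 2 ≤ B → 2 * B ≤ n → ε * (B : ℝ) ≤ (Bh : ℝ) → 2 * Bh ≤ B →
          ∀ δ : ℝ, 0 ≤ δ → δ ≤ 1 →
            ∀ p : Fin n → ℝ, (∀ j, 0 ≤ p j) → (∀ j, p j ≤ 1) →
              (∀ j : Fin n, (j : ℕ) < Bh → p j ≤ δ) →
              (1 / ∑ i : Fin n, zipf i) *
                  (∑ i : Fin n, zipf i *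
                    noisyExp (m := B - Bh) p (fun a h s =>
                      |(if a i then
                          sgn (s i) * ∑ j : Fin n,
                            if a j = true ∧ h j = h i then sgn (s j) * zipf j else 0
                        else zipf i) - zipf i|)) ≤
                C * (δ * Real.log (B : ℝ) + Real.log ((n : ℝ) / (B : ℝ))) *
                  (1 + δ * Real.log (B : ℝ)) / ((B : ℝ) * Real.log (n : ℝ)) := by
  intro ε hε _
  refine ⟨(5 + 2 / ε) * (2 + √(2 / ε)), by positivity, ?_⟩
  intro n B Bh hB hBn hεB hBhB δ hδ₀ hδ₁ p hp₀ hp₁ hpδ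
  have : NeZero (B - Bh) := ⟨by omega⟩
  have hlog₀ : 0 < Real.log n := Real.log_pos (by norm_cast; omega)
  have hlog : Real.log n ≤ ∑ i : Fin n, zipf i := log_le_sum_zipf (by omega)
  have hH : 0 < ∑ i : Fin n, zipf i := hlog₀.trans_le hlog
  replace hpδ : ∀ j ∈ heavyItems n Bh, p j ≤ δ := fun j hj ↦ hpδ j (mem_heavyItems.1 hj)
  have hmass₀ : 0 ≤ ∑ i, p i * zipf i := sum_nonneg fun i _ ↦ mul_nonneg (hp₀ i) (zipf_pos i).le
  have hmass := sum_mul_zipf_le_mul_log hε (by omega) hBn hεB (by omega) hδ₀ hδ₁ hp₁ hpδ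
  have hnoise := collisionNoiseBound_zipf_le (m := B - Bh) hε (by omega) (by omega) hεB (by omega)
    (by omega) hδ₀ hδ₁ hpδ
  set M : ℝ := (5 + 2 / ε) * (δ * Real.log B + Real.log (n / B))
  set N : ℝ := (2 + √(2 / ε)) * (1 + δ * Real.log B) / B
  have hN : 0 ≤ N := by positivity
  calc _ ≤ (1 / ∑ i : Fin n, zipf i) *
        ((∑ i, p i * zipf i) * collisionNoiseBound zipf p (heavyItems n Bh) (B - Bh)) := by
        gcongr
        exact sum_mul_noisyExp_abs_countSketchEstimate_sub_self_le
          (fun i ↦ (zipf_pos i).le) zipf hp₀ hp₁ (heavyItems n Bh)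
    _ ≤ (1 / ∑ i : Fin n, zipf i) * ((∑ i, p i * zipf i) * N) := by gcongr
    _ ≤ (1 / Real.log n) * (M * N) :=
        mul_le_mul (one_div_le_one_div_of_le hlog₀ hlog) (mul_le_mul_of_nonneg_right hmass hN)
          (mul_nonneg hmass₀ hN) (one_div_nonneg.2 hlog₀.le)
    _ = _ := by ring
end

section
/- For every fixed α > 1 there exists a constant c > 0 (depending only on α) such that the following holds. For all n, B ∈ ℕ with n ≥ 3B, and for every (deterministic, arbitrary) function h : {1,...,n} → {1,...,B}, defining f̃_i = Σ_{j=1}^n 1[h(j)=h(i)]·(1/j^α) for each i ∈ {1,...,n}, one has Σ_{i=1}^n (1/i^α)·(f̃_i − 1/i^α) ≥ c·B^{1−2α}. -/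
/-- Generalized Zipfian frequency with exponent `α` of the item indexed by
`i : Fin n` (representing item `i+1`): `1/(i+1)^α`. -/
noncomputable def zipfGen (α : ℝ) {n : ℕ} (i : Fin n) : ℝ :=
  ((i : ℝ) + 1) ^ (-α)

/-!
Among any `2B` items, at most `B` are alone in their bucket, so at least `B` collide with another
of the `2B`. Take the items with indices in `(B, 3B]`: their frequencies are all of order
`B ^ (-α)`, so each colliding item contributes at least a term of order `B ^ (-2α)` to the weighted
error.
-/

open Finset

section Collisions

variable {ι β : Type*} [DecidableEq ι] [DecidableEq β]

/-- The items of `s` that share their bucket under `h` with another item of `s`. -/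
def collidingItems (h : ι → β) (s : Finset ι) : Finset ι :=
  {i ∈ s | ∃ j ∈ s, j ≠ i ∧ h j = h i}

theorem mem_collidingItems {h : ι → β} {s : Finset ι} {i : ι} :
    i ∈ collidingItems h s ↔ i ∈ s ∧ ∃ j ∈ s, j ≠ i ∧ h j = h i :=
  mem_filter

theorem injOn_sdiff_collidingItems (h : ι → β) (s : Finset ι) :
    Set.InjOn h (s \ collidingItems h s : Finset ι) := by
  intro i hi j hj hij
  rw [mem_coe, mem_sdiff] at hi hj
  by_contra hne
  exact hj.2 (mem_collidingItems.2 ⟨hj.1, i, hi.1, hne, hij⟩)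

theorem card_le_card_image_add_card_collidingItems (h : ι → β) (s : Finset ι) :
    #s ≤ #(s.image h) + #(collidingItems h s) := by
  have hsub : collidingItems h s ⊆ s := filter_subset _ _
  calc #s = #(s \ collidingItems h s) + #(collidingItems h s) :=
        (card_sdiff_add_card_eq_card hsub).symm
    _ = #((s \ collidingItems h s).image h) + #(collidingItems h s) := by
        rw [card_image_of_injOn (injOn_sdiff_collidingItems h s)]
    _ ≤ #(s.image h) + #(collidingItems h s) := by
        gcongr
        exact sdiff_subset

end Collisions

section EstimationError

variable {ι β R : Type*} [Fintype ι] [DecidableEq β]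

/-- The error `f̃ᵢ - fᵢ` made when the frequency of item `i` is estimated by the total frequency
of its bucket. -/
def estimationError [AddCommGroup R] (f : ι → R) (h : ι → β) (i : ι) : R :=
  (∑ j, if h j = h i then f j else 0) - f i

theorem estimationError_eq_sum_erase [AddCommGroup R] [DecidableEq ι] (f : ι → R) (h : ι → β)
    (i : ι) : estimationError f h i = ∑ j ∈ univ.erase i with h j = h i, f j := by
  rw [estimationError, ← add_sum_erase _ _ (mem_univ i), if_pos rfl, add_sub_cancel_left,
    sum_filter]

theorem estimationError_nonneg [AddCommGroup R] [PartialOrder R] [IsOrderedAddMonoid R]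
    {f : ι → R} (hf : ∀ i, 0 ≤ f i) (h : ι → β) (i : ι) : 0 ≤ estimationError f h i := by
  classical
  rw [estimationError_eq_sum_erase]
  exact sum_nonneg fun j _ => hf j

theorem le_estimationError [AddCommGroup R] [PartialOrder R] [IsOrderedAddMonoid R]
    {f : ι → R} (hf : ∀ i, 0 ≤ f i) {h : ι → β} {i j : ι} (hne : j ≠ i) (hij : h j = h i) :
    f j ≤ estimationError f h i := by
  classical
  rw [estimationError_eq_sum_erase]
  exact single_le_sum (fun k _ => hf k) (mem_filter.2 ⟨mem_erase.2 ⟨hne, mem_univ j⟩, hij⟩)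

theorem card_collidingItems_mul_sq_le_sum_mul_estimationError [DecidableEq ι]
    [Ring R] [PartialOrder R] [IsOrderedRing R] {f : ι → R} (hf : ∀ i, 0 ≤ f i) (h : ι → β)
    {s : Finset ι} {w : R} (hw : 0 ≤ w) (hws : ∀ i ∈ s, w ≤ f i) :
    #(collidingItems h s) * w ^ 2 ≤ ∑ i, f i * estimationError f h i := by
  have hcollide : ∀ i ∈ collidingItems h s, w ^ 2 ≤ f i * estimationError f h i := by
    intro i hi
    obtain ⟨his, j, hjs, hne, hij⟩ := mem_collidingItems.1 hi
    rw [sq]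
    exact mul_le_mul (hws i his) ((hws j hjs).trans (le_estimationError hf hne hij)) hw (hf i)
  calc #(collidingItems h s) * w ^ 2 = #(collidingItems h s) • w ^ 2 := (nsmul_eq_mul _ _).symm
    _ ≤ ∑ i ∈ collidingItems h s, f i * estimationError f h i := card_nsmul_le_sum _ _ _ hcollide
    _ ≤ ∑ i, f i * estimationError f h i :=
        sum_le_univ_sum_of_nonneg fun i => mul_nonneg (hf i) (estimationError_nonneg hf h i)

end EstimationError

theorem min_one_rpow_mul_rpow_le_rpow {a b x : ℝ} (ha : 0 ≤ a) (hb : 0 < b) (hbx : b ≤ x)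
    (hxa : x ≤ a * b) (p : ℝ) : min 1 (a ^ p) * b ^ p ≤ x ^ p := by
  rcases le_total 0 p with hp | hp
  · calc min 1 (a ^ p) * b ^ p ≤ 1 * b ^ p := by gcongr; exact min_le_left _ _
      _ = b ^ p := one_mul _
      _ ≤ x ^ p := Real.rpow_le_rpow hb.le hbx hp
  · calc min 1 (a ^ p) * b ^ p ≤ a ^ p * b ^ p := by gcongr; exact min_le_right _ _
      _ = (a * b) ^ p := (Real.mul_rpow ha hb.le).symm
      _ ≤ x ^ p := Real.rpow_le_rpow_of_nonpos (hb.trans_le hbx) hxa hp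

theorem zipfGen_nonneg (α : ℝ) {n : ℕ} (i : Fin n) : 0 ≤ zipfGen α i := by
  unfold zipfGen
  positivity

theorem min_one_rpow_mul_rpow_le_zipfGen (α : ℝ) {n k B : ℕ} (hB : 0 < B) {i : Fin n}
    (hi : (i : ℕ) ∈ Ico B (k * B)) :
    min 1 ((k : ℝ) ^ (-α)) * (B : ℝ) ^ (-α) ≤ zipfGen α i := by
  obtain ⟨hBi, hik⟩ := mem_Ico.1 hi
  refine min_one_rpow_mul_rpow_le_rpow k.cast_nonneg (Nat.cast_pos.2 hB) ?_ ?_ (-α)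
  · exact_mod_cast hBi.trans (Nat.le_succ i)
  · exact_mod_cast hik

theorem countMin_deterministic_lower_large_alpha_general (α : ℝ) :
    ∃ c : ℝ, 0 < c ∧
      ∀ n B : ℕ, 0 < B → 3 * B ≤ n →
        ∀ h : Fin n → Fin B,
          c * (B : ℝ) ^ (1 - 2 * α) ≤
            ∑ i : Fin n, zipfGen α i * estimationError (zipfGen α) h i := by
  let c : ℝ := min 1 ((3 : ℕ) ^ (-α))
  refine ⟨c ^ 2, by positivity, fun n B hB hn h => ?_⟩
  let s : Finset (Fin n) := (Ico B (3 * B)).attachFin fun _ hi => (mem_Ico.1 hi).2.trans_le hn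
  have hcard : B ≤ #(collidingItems h s) := by
    have hs : #s = 3 * B - B := by rw [card_attachFin, Nat.card_Ico]
    have himage : #(s.image h) ≤ B := card_finset_fin_le _
    have := card_le_card_image_add_card_collidingItems h s
    omega
  have hfreq : ∀ i ∈ s, c * (B : ℝ) ^ (-α) ≤ zipfGen α i := fun i hi =>
    min_one_rpow_mul_rpow_le_zipfGen α hB ((mem_attachFin _).1 hi)
  have hpow : (B : ℝ) ^ (1 - 2 * α) = B * ((B : ℝ) ^ (-α)) ^ 2 := by
    rw [show 1 - 2 * α = 1 + (-α + -α) by ring, Real.rpow_add (by positivity),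
      Real.rpow_add (by positivity), Real.rpow_one, sq]
  calc c ^ 2 * (B : ℝ) ^ (1 - 2 * α) = B * (c * (B : ℝ) ^ (-α)) ^ 2 := by rw [hpow]; ring
    _ ≤ #(collidingItems h s) * (c * (B : ℝ) ^ (-α)) ^ 2 := by gcongr
    _ ≤ ∑ i, zipfGen α i * estimationError (zipfGen α) h i :=
        card_collidingItems_mul_sq_le_sum_mul_estimationError (zipfGen_nonneg α) h
          (by positivity) hfreq

/-- deterministic lower bound for `α > 1`: for any assignment
`h` of the `n` items to `B` buckets, the total frequency-weighted error of the
bucket-total estimates is at least `c·B^{1-2α}`, provided `n ≥ 3B`. -/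
theorem countMin_deterministic_lower_large_alpha :
    ∀ α : ℝ, 1 < α →
      ∃ c : ℝ, 0 < c ∧
        ∀ n B : ℕ, 3 * B ≤ n →
          ∀ h : Fin n → Fin B,
            c * (B : ℝ) ^ (1 - 2 * α) ≤
              ∑ i : Fin n, zipfGen α i *
                ((∑ j : Fin n, if h j = h i then zipfGen α j else 0) -
                  zipfGen α i) := by
  intro α hα
  obtain ⟨c, hc, hbound⟩ := countMin_deterministic_lower_large_alpha_general α
  refine ⟨c, hc, fun n B hn h => ?_⟩
  rcases B.eq_zero_or_pos with rfl | hB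
  · have := Function.isEmpty h
    simp [Real.zero_rpow (by linarith : 1 - 2 * α ≠ 0)]
  · exact hbound n B hB hn h
end
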